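/- Let n ≥ 1, δ > 0, and let V : ℝⁿ → ℝ be a smooth potential of symbolic decay order −δ: for every multi-index α there is a constant C_α such that |∂^α V(x)| ≤ C_α (1+|x|)^{−δ−|α|} for all x ∈ ℝⁿ. Let λ ∈ ℝ be arbitrary and let ψ : ℝⁿ → ℂ be smooth with −Δψ + Vψ = λψ on ℝⁿ (Δ = Σᵢ ∂²/∂xᵢ²), and suppose that for every α ∈ ℝ one has ∫_{ℝⁿ} e^{2α|x|} |ψ(x)|² dx < ∞. Then ψ ≡ 0. -/

import Mathlib

open MeasureTheory

/-- Euclidean Laplacian of a complex-valued function on `ℝⁿ`. -/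
noncomputable def lap {n : ℕ} (f : EuclideanSpace ℝ (Fin n) → ℂ)
    (x : EuclideanSpace ℝ (Fin n)) : ℂ :=
  ∑ i : Fin n, fderiv ℝ (fun y => fderiv ℝ f y (EuclideanSpace.single i 1)) x
    (EuclideanSpace.single i 1)

/-!
For a convex weight `η` with bounded derivatives, the conjugated function `v = exp η * u` of a
solution of `Δ u = W u` satisfies `Δ v = A v + q v` with `A = 2 ∇η · ∇ + Δη` antisymmetric and
`q = W - |∇η| ^ 2`. Multiplying by `A v` gives a positive commutator: `(A v) ^ 2`, plus twice the
Hessian of `η` on `∇v`, plus `v ^ 2` times (twice the Hessian of `η` on `∇η`, minus error terms), is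
a divergence. If `v` is square integrable then so is `∇v`, so the divergence has integral zero, and
`v = 0` as soon as the Hessian term beats the errors.

The error `∇W · ∇η` is `O(⟨x⟩ ^ (-1 - δ))`, so a weight of linear growth suffices: a large multiple
of `⟨x⟩ - ⟨x⟩ ^ (1 - ε) / (2 (1 - ε))` plus a linear function that keeps `∇η` away from zero. The
estimate is then global, and superexponential decay makes `exp η * u` square integrable.
-/

open scoped Gradient Laplacian InnerProductSpace ContDiff

/-! ### Gradient, divergence and Laplacian -/

section Gradient

variable {E : Type*} [NormedAddCommGroup E] [InnerProductSpace ℝ E] [CompleteSpace E]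
  {f g : E → ℝ} {x : E}

theorem gradient_add (hf : DifferentiableAt ℝ f x) (hg : DifferentiableAt ℝ g x) :
    ∇ (fun y ↦ f y + g y) x = ∇ f x + ∇ g x := by
  simp [gradient, fderiv_fun_add hf hg]

theorem gradient_sub (hf : DifferentiableAt ℝ f x) (hg : DifferentiableAt ℝ g x) :
    ∇ (fun y ↦ f y - g y) x = ∇ f x - ∇ g x := by
  simp [gradient, fderiv_fun_sub hf hg]

theorem gradient_mul (hf : DifferentiableAt ℝ f x) (hg : DifferentiableAt ℝ g x) :
    ∇ (fun y ↦ f y * g y) x = f x • ∇ g x + g x • ∇ f x := by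
  simp [gradient, fderiv_fun_mul hf hg]

theorem gradient_const_mul (c : ℝ) (hf : DifferentiableAt ℝ f x) :
    ∇ (fun y ↦ c * f y) x = c • ∇ f x := by
  simp [gradient, fderiv_const_mul hf]

theorem gradient_const_smul (c : ℝ) (hf : Differentiable ℝ f) : ∇ (c • f) = c • ∇ f :=
  funext fun x ↦ gradient_const_mul c (hf x)

theorem gradient_exp (hf : DifferentiableAt ℝ f x) :
    ∇ (fun y ↦ Real.exp (f y)) x = Real.exp (f x) • ∇ f x := by
  simp [gradient, fderiv_exp hf]

theorem gradient_inner_right (a x : E) : ∇ (fun y ↦ ⟪a, y⟫_ℝ) x = a :=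
  (hasGradientAt_iff_hasFDerivAt.mpr (innerSL ℝ a).hasFDerivAt).gradient

theorem norm_gradient (f : E → ℝ) (x : E) : ‖∇ f x‖ = ‖fderiv ℝ f x‖ :=
  (InnerProductSpace.toDual ℝ E).symm.norm_map _

theorem contDiff_gradient {m n : WithTop ℕ∞} (hf : ContDiff ℝ n f) (hmn : m + 1 ≤ n) :
    ContDiff ℝ m (∇ f) :=
  (InnerProductSpace.toDual ℝ E).symm.contDiff.comp (hf.fderiv_right hmn)

theorem gradient_comp_smul (f : E → ℝ) (c : ℝ) (x : E) :
    ∇ (fun y ↦ f (c • y)) x = c • ∇ f (c • x) := by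
  simp [gradient, fderiv_comp_smul]

theorem hasCompactSupport_gradient (hf : HasCompactSupport f) : HasCompactSupport (∇ f) :=
  (hf.fderiv (𝕜 := ℝ)).comp_left (map_zero _)

theorem inner_fderiv_gradient (f : E → ℝ) (x ξ ζ : E) :
    ⟪fderiv ℝ (∇ f) x ξ, ζ⟫_ℝ = fderiv ℝ (fderiv ℝ f) x ξ ζ := by
  have hcomp : ∇ f = (InnerProductSpace.toDual ℝ E).symm ∘ fderiv ℝ f := rfl
  rw [hcomp, LinearIsometryEquiv.comp_fderiv]
  exact InnerProductSpace.toDual_symm_apply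

theorem inner_fderiv_gradient_comm (hf : ContDiff ℝ 2 f) (x ξ ζ : E) :
    ⟪fderiv ℝ (∇ f) x ξ, ζ⟫_ℝ = ⟪fderiv ℝ (∇ f) x ζ, ξ⟫_ℝ := by
  rw [inner_fderiv_gradient, inner_fderiv_gradient]
  exact hf.contDiffAt.isSymmSndFDerivAt (by simp) ξ ζ

theorem inner_gradient_inner {F G : E → E} (hF : DifferentiableAt ℝ F x)
    (hG : DifferentiableAt ℝ G x) (ξ : E) :
    ⟪∇ (fun y ↦ ⟪F y, G y⟫_ℝ) x, ξ⟫_ℝ = ⟪F x, fderiv ℝ G x ξ⟫_ℝ + ⟪fderiv ℝ F x ξ, G x⟫_ℝ := by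
  rw [inner_gradient_left, fderiv_inner_apply ℝ hF hG]

end Gradient

/-- The divergence of a vector field, as the trace of its derivative. -/
noncomputable def divergence {E : Type*} [NormedAddCommGroup E] [NormedSpace ℝ E]
    (F : E → E) (x : E) : ℝ :=
  LinearMap.trace ℝ E (fderiv ℝ F x)

section Divergence

variable {E : Type*} [NormedAddCommGroup E] [NormedSpace ℝ E] {F G : E → E} {x : E}

theorem divergence_add (hF : DifferentiableAt ℝ F x) (hG : DifferentiableAt ℝ G x) :
    divergence (fun y ↦ F y + G y) x = divergence F x + divergence G x := by
  simp [divergence, fderiv_fun_add hF hG]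

theorem divergence_sub (hF : DifferentiableAt ℝ F x) (hG : DifferentiableAt ℝ G x) :
    divergence (fun y ↦ F y - G y) x = divergence F x - divergence G x := by
  simp [divergence, fderiv_fun_sub hF hG]

theorem contDiff_divergence [FiniteDimensional ℝ E] {m n : WithTop ℕ∞} (hF : ContDiff ℝ n F)
    (hmn : m + 1 ≤ n) : ContDiff ℝ m (divergence F) :=
  (LinearMap.trace ℝ E ∘ₗ ContinuousLinearMap.coeLM ℝ).toContinuousLinearMap.contDiff.comp
    (hF.fderiv_right hmn)

theorem hasCompactSupport_divergence (hF : HasCompactSupport F) :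
    HasCompactSupport (divergence F) :=
  (hF.fderiv (𝕜 := ℝ)).comp_left (g := fun T : E →L[ℝ] E ↦ LinearMap.trace ℝ E T) (by simp)

end Divergence

section DivergenceGradient

variable {E : Type*} [NormedAddCommGroup E] [InnerProductSpace ℝ E] [FiniteDimensional ℝ E]
  {f g : E → ℝ} {F : E → E} {x : E}

theorem divergence_smul (hf : DifferentiableAt ℝ f x) (hF : DifferentiableAt ℝ F x) :
    divergence (fun y ↦ f y • F y) x = f x * divergence F x + ⟪∇ f x, F x⟫_ℝ := by
  simp [divergence, fderiv_fun_smul hf hF, LinearMap.trace_smulRight]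

theorem divergence_eq_sum_inner (F : E → E) (x : E) :
    divergence F x =
      ∑ i, ⟪stdOrthonormalBasis ℝ E i, fderiv ℝ F x (stdOrthonormalBasis ℝ E i)⟫_ℝ :=
  LinearMap.trace_eq_sum_inner _ _

theorem divergence_gradient (f : E → ℝ) : divergence (∇ f) = Δ f := by
  ext x
  rw [divergence_eq_sum_inner, InnerProductSpace.laplacian_eq_iteratedFDeriv_stdOrthonormalBasis]
  simp [iteratedFDeriv_two_apply, real_inner_comm (fderiv ℝ (∇ f) x _), inner_fderiv_gradient]

theorem contDiff_laplacian {m n : WithTop ℕ∞} (hf : ContDiff ℝ n f) (hmn : m + 2 ≤ n) :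
    ContDiff ℝ m (Δ f) := by
  rw [← divergence_gradient]
  exact contDiff_divergence (contDiff_gradient hf (by rwa [add_assoc, one_add_one_eq_two])) le_rfl

theorem laplacian_mul (hf : ContDiff ℝ 2 f) (hg : ContDiff ℝ 2 g) (x : E) :
    Δ (fun y ↦ f y * g y) x = f x * Δ g x + g x * Δ f x + 2 * ⟪∇ f x, ∇ g x⟫_ℝ := by
  have hf' : Differentiable ℝ f := hf.differentiable two_ne_zero
  have hg' : Differentiable ℝ g := hg.differentiable two_ne_zero
  have hdf : Differentiable ℝ (∇ f) :=
    (contDiff_gradient hf one_add_one_eq_two.le).differentiable_one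
  have hdg : Differentiable ℝ (∇ g) :=
    (contDiff_gradient hg one_add_one_eq_two.le).differentiable_one
  have hgrad : ∇ (fun y ↦ f y * g y) = fun y ↦ f y • ∇ g y + g y • ∇ f y :=
    funext fun y ↦ gradient_mul (hf' y) (hg' y)
  rw [← divergence_gradient, hgrad,
    divergence_add ((hf' x).fun_smul (hdg x)) ((hg' x).fun_smul (hdf x)),
    divergence_smul (hf' x) (hdg x), divergence_smul (hg' x) (hdf x),
    divergence_gradient, divergence_gradient, real_inner_comm (∇ f x)]
  ring

theorem laplacian_const_smul (c : ℝ) (hf : ContDiff ℝ 2 f) : Δ (c • f) = c • Δ f :=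
  funext fun _ ↦ InnerProductSpace.laplacian_smul c hf.contDiffAt

theorem laplacian_comp_smul (f : E → ℝ) (c : ℝ) (x : E) :
    Δ (fun y ↦ f (c • y)) x = c ^ 2 * Δ f (c • x) := by
  have hgrad : ∇ (fun y ↦ f (c • y)) = c • fun y ↦ ∇ f (c • y) :=
    funext (gradient_comp_smul f c)
  rw [← divergence_gradient, ← divergence_gradient, hgrad]
  simp [divergence, fderiv_const_smul_field, fderiv_comp_smul, pow_two, mul_assoc]

end DivergenceGradient

section IntegralFDeriv

variable {E : Type*} [NormedAddCommGroup E] [NormedSpace ℝ E] [MeasurableSpace E] [BorelSpace E]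
  {μ : Measure E} {f : E → ℝ}

theorem integrable_fderiv_apply [IsFiniteMeasureOnCompacts μ] (hf : ContDiff ℝ 1 f)
    (hc : HasCompactSupport f) (v : E) : Integrable (fun x ↦ fderiv ℝ f x v) μ :=
  ((hf.continuous_fderiv one_ne_zero).clm_apply continuous_const).integrable_of_hasCompactSupport
    (hc.fderiv_apply (𝕜 := ℝ) v)

theorem integral_fderiv_apply_eq_zero [FiniteDimensional ℝ E] [μ.IsAddHaarMeasure]
    (hf : ContDiff ℝ 1 f) (hc : HasCompactSupport f) (v : E) : ∫ x, fderiv ℝ f x v ∂μ = 0 := by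
  simpa using integral_mul_fderiv_eq_neg_fderiv_mul_of_integrable (μ := μ) (f := fun _ ↦ (1 : ℝ))
    (by simp) (by simpa using integrable_fderiv_apply hf hc v)
    (by simpa using hf.continuous.integrable_of_hasCompactSupport hc)
    (by simp) (fun x _ ↦ hf.differentiable_one x)

end IntegralFDeriv

section IntegralDivergence

variable {E : Type*} [NormedAddCommGroup E] [InnerProductSpace ℝ E] [FiniteDimensional ℝ E]
  [MeasurableSpace E] [BorelSpace E] {μ : Measure E} [μ.IsAddHaarMeasure]

theorem integral_divergence_eq_zero {F : E → E} (hF : ContDiff ℝ 1 F) (hc : HasCompactSupport F) :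
    ∫ x, divergence F x ∂μ = 0 := by
  have hcomponent (v : E) : ContDiff ℝ 1 (fun y ↦ ⟪v, F y⟫_ℝ) := contDiff_const.inner ℝ hF
  have hcomponent_supp (v : E) : HasCompactSupport (fun y ↦ ⟪v, F y⟫_ℝ) :=
    hc.comp_left (g := fun z ↦ ⟪v, z⟫_ℝ) (inner_zero_right v)
  have hfderiv (v x : E) : fderiv ℝ (fun y ↦ ⟪v, F y⟫_ℝ) x v = ⟪v, fderiv ℝ F x v⟫_ℝ := by
    simp [fderiv_inner_apply ℝ (differentiableAt_const v) (hF.differentiable_one x)]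
  simp_rw [divergence_eq_sum_inner, ← hfderiv]
  rw [integral_finsetSum _ fun i _ ↦ integrable_fderiv_apply (hcomponent _) (hcomponent_supp _) _]
  exact Finset.sum_eq_zero fun i _ ↦
    integral_fderiv_apply_eq_zero (hcomponent _) (hcomponent_supp _) _

theorem integral_mul_divergence_eq_neg {χ : E → ℝ} {F : E → E} (hχ : ContDiff ℝ 1 χ)
    (hc : HasCompactSupport χ) (hF : ContDiff ℝ 1 F) :
    ∫ x, χ x * divergence F x ∂μ = -∫ x, ⟪∇ χ x, F x⟫_ℝ ∂μ := by
  have hmul : Integrable (fun x ↦ χ x * divergence F x) μ :=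
    (hχ.continuous.mul (contDiff_divergence hF (m := 0) le_rfl).continuous)
      |>.integrable_of_hasCompactSupport hc.mul_right
  have hinner : Integrable (fun x ↦ ⟪∇ χ x, F x⟫_ℝ) μ := by
    refine ((contDiff_gradient hχ (m := 0) le_rfl).continuous.inner hF.continuous)
      |>.integrable_of_hasCompactSupport ((hasCompactSupport_gradient hc).mono fun x hx h ↦ hx ?_)
    simp [h]
  have hzero : ∫ x, divergence (fun y ↦ χ y • F y) x ∂μ = 0 :=
    integral_divergence_eq_zero (hχ.smul hF) hc.smul_right
  simp_rw [divergence_smul (hχ.differentiable_one _) (hF.differentiable_one _)] at hzero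
  rwa [integral_add hmul hinner, ← eq_neg_iff_add_eq_zero] at hzero

theorem integral_mul_laplacian_comm {χ f : E → ℝ} (hχ : ContDiff ℝ 2 χ)
    (hc : HasCompactSupport χ) (hf : ContDiff ℝ 2 f) :
    ∫ x, χ x * Δ f x ∂μ = ∫ x, f x * Δ χ x ∂μ := by
  have hdf : ContDiff ℝ 1 (∇ f) := contDiff_gradient hf one_add_one_eq_two.le
  have hdχ : ContDiff ℝ 1 (∇ χ) := contDiff_gradient hχ one_add_one_eq_two.le
  have hf1 : ContDiff ℝ 1 f := hf.of_le one_le_two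
  have hχ1 : ContDiff ℝ 1 χ := hχ.of_le one_le_two
  have hcΔ : HasCompactSupport (Δ χ) := by
    rw [← divergence_gradient]
    exact hasCompactSupport_divergence (hasCompactSupport_gradient hc)
  have hleft : Integrable (fun x ↦ χ x * Δ f x) μ :=
    (hχ.continuous.mul (contDiff_laplacian (m := 0) hf (by simp)).continuous)
      |>.integrable_of_hasCompactSupport hc.mul_right
  have hright : Integrable (fun x ↦ f x * Δ χ x) μ :=
    (hf.continuous.mul (contDiff_laplacian (m := 0) hχ (by simp)).continuous)
      |>.integrable_of_hasCompactSupport hcΔ.mul_left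
  have hdiv (x : E) : divergence (fun y ↦ χ y • ∇ f y - f y • ∇ χ y) x =
      χ x * Δ f x - f x * Δ χ x := by
    rw [divergence_sub ((hχ1.fun_smul hdf).differentiable_one x)
        ((hf1.fun_smul hdχ).differentiable_one x),
      divergence_smul (hχ1.differentiable_one x) (hdf.differentiable_one x),
      divergence_smul (hf1.differentiable_one x) (hdχ.differentiable_one x),
      divergence_gradient, divergence_gradient, real_inner_comm]
    ring
  have hzero := integral_divergence_eq_zero (μ := μ) ((hχ1.fun_smul hdf).sub (hf1.fun_smul hdχ))
    (hc.smul_right.sub (hasCompactSupport_gradient hc).smul_left)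
  simp_rw [hdiv] at hzero
  rwa [integral_sub hleft hright, sub_eq_zero] at hzero

end IntegralDivergence

/-! ### Integration against cutoffs -/

section Cutoff

variable {E : Type*} [NormedAddCommGroup E] [InnerProductSpace ℝ E] [FiniteDimensional ℝ E]

/-- A smooth cutoff at scale `R`: the dilation by `R` of a fixed bump function. -/
noncomputable def cutoff (R : ℝ) (x : E) : ℝ :=
  (⟨1, 2, one_pos, one_lt_two⟩ : ContDiffBump (0 : E)) (R⁻¹ • x)

theorem cutoff_eq_comp_smul (R : ℝ) : (cutoff R : E → ℝ) = fun x ↦ cutoff 1 (R⁻¹ • x) := by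
  simp [funext_iff, cutoff]

theorem contDiff_cutoff (R : ℝ) {n : ℕ∞} : ContDiff ℝ n (cutoff R : E → ℝ) :=
  (ContDiffBump.contDiff _).comp (contDiff_const_smul _)

theorem cutoff_nonneg (R : ℝ) (x : E) : 0 ≤ cutoff R x := ContDiffBump.nonneg _

theorem cutoff_le_one (R : ℝ) (x : E) : cutoff R x ≤ 1 := ContDiffBump.le_one _

theorem cutoff_eq_one {R : ℝ} (hR : 0 < R) {x : E} (hx : ‖x‖ ≤ R) : cutoff R x = 1 := by
  apply ContDiffBump.one_of_mem_closedBall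
  rw [mem_closedBall_zero_iff, norm_smul, Real.norm_of_nonneg (by positivity)]
  exact (inv_mul_le_one₀ hR).mpr hx

theorem hasCompactSupport_cutoff {R : ℝ} (hR : 0 < R) : HasCompactSupport (cutoff R : E → ℝ) :=
  (ContDiffBump.hasCompactSupport _).comp_smul (inv_ne_zero hR.ne')

theorem exists_norm_gradient_cutoff_le :
    ∃ M, ∀ R > 0, ∀ x : E, ‖∇ (cutoff R : E → ℝ) x‖ ≤ M / R := by
  have hbump : HasCompactSupport (cutoff 1 : E → ℝ) := hasCompactSupport_cutoff one_pos
  obtain ⟨M, hM⟩ := (hbump.fderiv (𝕜 := ℝ)).exists_bound_of_continuous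
    ((contDiff_cutoff 1).continuous_fderiv one_ne_zero)
  refine ⟨M, fun R hR x ↦ ?_⟩
  have hnorm : ‖∇ (cutoff 1 : E → ℝ) (R⁻¹ • x)‖ ≤ M := (norm_gradient _ _).trans_le (hM _)
  rw [cutoff_eq_comp_smul, gradient_comp_smul, norm_smul, Real.norm_of_nonneg (by positivity),
    div_eq_inv_mul]
  gcongr

theorem exists_abs_laplacian_cutoff_le :
    ∃ M, ∀ R ≥ 1, ∀ x : E, |Δ (cutoff R : E → ℝ) x| ≤ M := by
  have hbump : HasCompactSupport (Δ (cutoff 1 : E → ℝ)) := by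
    rw [← divergence_gradient]
    exact hasCompactSupport_divergence
      (hasCompactSupport_gradient (hasCompactSupport_cutoff one_pos))
  obtain ⟨M, hM⟩ := hbump.exists_bound_of_continuous
    (contDiff_laplacian (contDiff_cutoff (n := 2) 1) (m := 0) (by simp)).continuous
  refine ⟨M, fun R hR x ↦ ?_⟩
  rw [cutoff_eq_comp_smul, laplacian_comp_smul, abs_mul, abs_of_nonneg (by positivity)]
  exact (mul_le_of_le_one_left (abs_nonneg _) (pow_le_one₀ (by positivity)
    (inv_le_one_of_one_le₀ hR))).trans (hM _)

variable [MeasurableSpace E] {μ : Measure E}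

theorem integral_cutoff_mul_le {f : E → ℝ} (hfi : Integrable f μ) (R : ℝ) :
    ∫ x, cutoff R x * f x ∂μ ≤ ∫ x, ‖f x‖ ∂μ := by
  refine (Real.le_norm_self _).trans <|
    norm_integral_le_of_norm_le hfi.norm (.of_forall fun x ↦ ?_)
  rw [norm_mul, Real.norm_of_nonneg (cutoff_nonneg R x)]
  exact mul_le_of_le_one_left (norm_nonneg _) (cutoff_le_one R x)

theorem integrable_cutoff_mul [BorelSpace E] [IsFiniteMeasureOnCompacts μ] {g : E → ℝ}
    (hg : Continuous g) {R : ℝ} (hR : 0 < R) :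
    Integrable (fun x ↦ cutoff R x * g x) μ :=
  ((contDiff_cutoff (n := 0) R).continuous.mul hg).integrable_of_hasCompactSupport
    (hasCompactSupport_cutoff hR).mul_right

theorem setIntegral_closedBall_le_integral_cutoff_mul [BorelSpace E]
    [IsFiniteMeasureOnCompacts μ] {g : E → ℝ} (hg : Continuous g) (hg0 : ∀ x, 0 ≤ g x) {R : ℝ}
    (hR : 0 < R) :
    ∫ x in Metric.closedBall 0 R, g x ∂μ ≤ ∫ x, cutoff R x * g x ∂μ := by
  calc ∫ x in Metric.closedBall 0 R, g x ∂μ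
      = ∫ x in Metric.closedBall 0 R, cutoff R x * g x ∂μ :=
        setIntegral_congr_fun Metric.isClosed_closedBall.measurableSet fun x hx ↦ by
          simp [cutoff_eq_one hR (mem_closedBall_zero_iff.mp hx)]
    _ ≤ ∫ x, cutoff R x * g x ∂μ :=
        setIntegral_le_integral (integrable_cutoff_mul hg hR)
          (.of_forall fun x ↦ mul_nonneg (cutoff_nonneg R x) (hg0 x))

variable [BorelSpace E] [μ.IsAddHaarMeasure]

theorem exists_integral_cutoff_mul_laplacian_le {f : E → ℝ} (hf : ContDiff ℝ 2 f)
    (hfi : Integrable f μ) : ∃ C, ∀ R ≥ 1, ∫ x, cutoff R x * Δ f x ∂μ ≤ C := by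
  obtain ⟨M, hM⟩ := exists_abs_laplacian_cutoff_le (E := E)
  refine ⟨∫ x, ‖f x‖ * M ∂μ, fun R hR ↦ ?_⟩
  rw [integral_mul_laplacian_comm (contDiff_cutoff R)
    (hasCompactSupport_cutoff (one_pos.trans_le hR)) hf]
  refine (Real.le_norm_self _).trans <|
    norm_integral_le_of_norm_le (hfi.norm.mul_const M) (.of_forall fun x ↦ ?_)
  rw [norm_mul]
  exact mul_le_mul_of_nonneg_left (hM R hR x) (norm_nonneg _)

theorem integrable_of_le_laplacian_add {f g : E → ℝ} {K : ℝ} (hf : ContDiff ℝ 2 f)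
    (hfi : Integrable f μ) (hg : Continuous g) (hg0 : ∀ x, 0 ≤ g x)
    (hle : ∀ x, g x ≤ Δ f x + K * f x) : Integrable g μ := by
  obtain ⟨C, hC⟩ := exists_integral_cutoff_mul_laplacian_le hf hfi
  have hΔ : Continuous (Δ f) := (contDiff_laplacian (m := 0) hf (by simp)).continuous
  have hKf : Continuous (fun x ↦ K * f x) := hf.continuous.const_mul K
  have hbound (R : ℝ) (hR : 1 ≤ R) :
      ∫ x in Metric.closedBall 0 R, g x ∂μ ≤ C + ∫ x, ‖K * f x‖ ∂μ := by
    have hR0 : 0 < R := one_pos.trans_le hR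
    calc ∫ x in Metric.closedBall 0 R, g x ∂μ
        ≤ ∫ x, cutoff R x * g x ∂μ := setIntegral_closedBall_le_integral_cutoff_mul hg hg0 hR0
      _ ≤ ∫ x, cutoff R x * (Δ f x + K * f x) ∂μ :=
          integral_mono (integrable_cutoff_mul hg hR0) (integrable_cutoff_mul (hΔ.add hKf) hR0)
            fun x ↦ mul_le_mul_of_nonneg_left (hle x) (cutoff_nonneg R x)
      _ = ∫ x, cutoff R x * Δ f x ∂μ + ∫ x, cutoff R x * (K * f x) ∂μ := by
          simp_rw [mul_add]
          exact integral_add (integrable_cutoff_mul hΔ hR0) (integrable_cutoff_mul hKf hR0)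
      _ ≤ C + ∫ x, ‖K * f x‖ ∂μ :=
          add_le_add (hC R hR) (integral_cutoff_mul_le (hfi.const_mul K) R)
  exact (aecover_closedBall Filter.tendsto_id).integrable_of_integral_bounded_of_nonneg_ae _
    (fun R ↦ hg.continuousOn.integrableOn_compact (isCompact_closedBall 0 R)) (.of_forall hg0)
    (Filter.eventually_atTop.mpr ⟨1, hbound⟩)

theorem exists_setIntegral_closedBall_divergence_le {F : E → E} (hF : ContDiff ℝ 1 F)
    (hFi : Integrable F μ) (hdiv : ∀ x, 0 ≤ divergence F x) :
    ∃ M, ∀ R > 0, ∫ x in Metric.closedBall 0 R, divergence F x ∂μ ≤ M / R := by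
  obtain ⟨M, hM⟩ := exists_norm_gradient_cutoff_le (E := E)
  refine ⟨M * ∫ x, ‖F x‖ ∂μ, fun R hR ↦ ?_⟩
  calc ∫ x in Metric.closedBall 0 R, divergence F x ∂μ
      ≤ ∫ x, cutoff R x * divergence F x ∂μ := setIntegral_closedBall_le_integral_cutoff_mul
        (contDiff_divergence hF (m := 0) le_rfl).continuous hdiv hR
    _ = -∫ x, ⟪∇ (cutoff R : E → ℝ) x, F x⟫_ℝ ∂μ :=
        integral_mul_divergence_eq_neg (contDiff_cutoff R) (hasCompactSupport_cutoff hR) hF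
    _ ≤ ∫ x, M / R * ‖F x‖ ∂μ := by
        refine (neg_le_abs _).trans <| (Real.norm_eq_abs _).symm.trans_le <|
          norm_integral_le_of_norm_le (hFi.norm.const_mul _) (.of_forall fun x ↦ ?_)
        exact (norm_inner_le_norm _ _).trans (by gcongr; exact hM R hR x)
    _ = (M * ∫ x, ‖F x‖ ∂μ) / R := by rw [integral_const_mul, div_mul_eq_mul_div]

theorem divergence_eq_zero_of_integrable {F : E → E} (hF : ContDiff ℝ 1 F)
    (hFi : Integrable F μ) (hdiv : ∀ x, 0 ≤ divergence F x) : divergence F = 0 := by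
  have hcont : Continuous (divergence F) := (contDiff_divergence hF (m := 0) le_rfl).continuous
  have hball (R : ℝ) : IntegrableOn (divergence F) (Metric.closedBall 0 R) μ :=
    hcont.continuousOn.integrableOn_compact (isCompact_closedBall 0 R)
  have hcover : AECover μ Filter.atTop (fun R : ℝ ↦ Metric.closedBall (0 : E) R) :=
    aecover_closedBall Filter.tendsto_id
  obtain ⟨M, hM⟩ := exists_setIntegral_closedBall_divergence_le hF hFi hdiv
  have hlim : Filter.Tendsto (fun R ↦ ∫ x in Metric.closedBall 0 R, divergence F x ∂μ)
      Filter.atTop (nhds 0) :=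
    squeeze_zero' (.of_forall fun R ↦ integral_nonneg hdiv)
      ((Filter.eventually_gt_atTop 0).mono hM) (tendsto_const_nhds.div_atTop Filter.tendsto_id)
  have hae : divergence F =ᵐ[μ] 0 :=
    (integral_eq_zero_iff_of_nonneg hdiv
      (hcover.integrable_of_integral_tendsto_of_nonneg_ae 0 hball (.of_forall hdiv) hlim)).mp
      (hcover.integral_eq_of_tendsto_of_nonneg_ae 0 (.of_forall hdiv) hball hlim)
  exact (hcont.ae_eq_iff_eq μ continuous_zero).mp hae

end Cutoff

/-! ### The Carleman estimate -/

section MultiplierField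

variable {E : Type*} [NormedAddCommGroup E] [InnerProductSpace ℝ E] [FiniteDimensional ℝ E]

/-- The field whose divergence expresses the positive commutator of `Δ - q` with the symmetrised
derivative `2 X · ∇ + div X`. -/
noncomputable def multiplierField (X : E → E) (q v : E → ℝ) (x : E) : E :=
  (2 * ⟪X x, ∇ v x⟫_ℝ + divergence X x * v x) • ∇ v x
    - (⟪∇ v x, ∇ v x⟫_ℝ + q x * (v x * v x)) • X x
    - (1 / 2 * (v x * v x)) • ∇ (divergence X) x

theorem contDiff_multiplierField {X : E → E} {q v : E → ℝ} (hX : ContDiff ℝ 3 X)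
    (hq : ContDiff ℝ 1 q) (hv : ContDiff ℝ 2 v) : ContDiff ℝ 1 (multiplierField X q v) := by
  have hX1 : ContDiff ℝ 1 X := hX.of_le (by norm_num)
  have hL : ContDiff ℝ 2 (divergence X) := contDiff_divergence hX (by norm_num)
  have hL1 : ContDiff ℝ 1 (divergence X) := hL.of_le one_le_two
  have hdL : ContDiff ℝ 1 (∇ (divergence X)) := contDiff_gradient hL (by norm_num)
  have hdv : ContDiff ℝ 1 (∇ v) := contDiff_gradient hv (by norm_num)
  have hv1 : ContDiff ℝ 1 v := hv.of_le one_le_two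
  have hXv : ContDiff ℝ 1 fun y ↦ ⟪X y, ∇ v y⟫_ℝ := hX1.inner ℝ hdv
  have hvv : ContDiff ℝ 1 fun y ↦ ⟪∇ v y, ∇ v y⟫_ℝ := hdv.inner ℝ hdv
  unfold multiplierField
  fun_prop

theorem divergence_multiplierField {X : E → E} {q v : E → ℝ} (hX : ContDiff ℝ 3 X)
    (hq : ContDiff ℝ 1 q) (hv : ContDiff ℝ 2 v) (x : E) :
    divergence (multiplierField X q v) x =
      (2 * ⟪X x, ∇ v x⟫_ℝ + divergence X x * v x) * (Δ v x - q x * v x)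
        + 2 * ⟪fderiv ℝ X x (∇ v x), ∇ v x⟫_ℝ
        - v x ^ 2 * (1 / 2 * Δ (divergence X) x + ⟪∇ q x, X x⟫_ℝ) := by
  have hX1 : Differentiable ℝ X := hX.differentiable three_ne_zero
  have hL : ContDiff ℝ 2 (divergence X) := contDiff_divergence hX (by norm_num)
  have hL1 : Differentiable ℝ (divergence X) := hL.differentiable two_ne_zero
  have hdL : Differentiable ℝ (∇ (divergence X)) :=
    (contDiff_gradient hL (m := 1) (by norm_num)).differentiable_one
  have hdv : Differentiable ℝ (∇ v) :=
    (contDiff_gradient hv (m := 1) (by norm_num)).differentiable_one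
  have hv1 : Differentiable ℝ v := hv.differentiable two_ne_zero
  have hq1 : Differentiable ℝ q := hq.differentiable_one
  have hXv : Differentiable ℝ fun y ↦ ⟪X y, ∇ v y⟫_ℝ := hX1.inner ℝ hdv
  have hvv : Differentiable ℝ fun y ↦ ⟪∇ v y, ∇ v y⟫_ℝ := hdv.inner ℝ hdv
  unfold multiplierField
  rw [divergence_sub (by fun_prop) (by fun_prop), divergence_sub (by fun_prop) (by fun_prop),
    divergence_smul (by fun_prop) (hdv x), divergence_smul (by fun_prop) (hX1 x),
    divergence_smul (by fun_prop) (hdL x), divergence_gradient, divergence_gradient,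
    gradient_add ((hXv x).const_mul 2) (by fun_prop), gradient_add (hvv x) (by fun_prop),
    gradient_const_mul _ (hXv x), gradient_const_mul _ (by fun_prop),
    gradient_mul (hL1 x) (hv1 x), gradient_mul (hq1 x) (by fun_prop),
    gradient_mul (hv1 x) (hv1 x)]
  simp only [inner_add_left, real_inner_smul_left, inner_gradient_inner (hX1 x) (hdv x),
    inner_gradient_inner (hdv x) (hdv x)]
  have hhess : ⟪X x, fderiv ℝ (∇ v) x (∇ v x)⟫_ℝ = ⟪∇ v x, fderiv ℝ (∇ v) x (X x)⟫_ℝ := by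
    rw [real_inner_comm, inner_fderiv_gradient_comm hv, real_inner_comm]
  rw [hhess, real_inner_comm (∇ v x) (fderiv ℝ (∇ v) x (X x)),
    real_inner_comm (∇ v x) (∇ (divergence X) x), real_inner_comm (∇ v x) (X x)]
  ring

theorem norm_multiplierField_le {X : E → E} {q v : E → ℝ} {B : ℝ} {x : E} (hX : ‖X x‖ ≤ B)
    (hdiv : |divergence X x| ≤ B) (hgrad : ‖∇ (divergence X) x‖ ≤ B) (hq : |q x| ≤ B) :
    ‖multiplierField X q v x‖ ≤ (B ^ 2 + 4 * B) * (‖∇ v x‖ ^ 2 + v x ^ 2) := by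
  have hB : 0 ≤ B := (norm_nonneg _).trans hX
  have hfirst : |2 * ⟪X x, ∇ v x⟫_ℝ + divergence X x * v x| ≤ 2 * (B * ‖∇ v x‖) + B * |v x| := by
    refine (abs_add_le _ _).trans ?_
    rw [abs_mul, abs_mul, abs_two]
    gcongr
    exact (abs_real_inner_le_norm _ _).trans (by gcongr)
  have hsecond : |⟪∇ v x, ∇ v x⟫_ℝ + q x * (v x * v x)| ≤ ‖∇ v x‖ ^ 2 + B * v x ^ 2 := by
    refine (abs_add_le _ _).trans ?_
    rw [real_inner_self_eq_norm_sq, abs_mul, ← sq (v x), abs_sq, abs_sq]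
    gcongr
  have hthird : |1 / 2 * (v x * v x)| = 1 / 2 * v x ^ 2 := by
    rw [← sq, abs_of_nonneg (by positivity)]
  calc ‖multiplierField X q v x‖
      ≤ (2 * (B * ‖∇ v x‖) + B * |v x|) * ‖∇ v x‖ + (‖∇ v x‖ ^ 2 + B * v x ^ 2) * B
          + 1 / 2 * v x ^ 2 * B := by
        refine (norm_sub_le_of_le (norm_sub_le _ _) le_rfl).trans ?_
        simp only [norm_smul, Real.norm_eq_abs, hthird]
        gcongr
    _ ≤ (B ^ 2 + 4 * B) * (‖∇ v x‖ ^ 2 + v x ^ 2) := by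
        nlinarith [mul_nonneg hB (sq_nonneg (‖∇ v x‖ - |v x|)), sq_abs (v x),
          mul_nonneg hB (sq_nonneg ‖∇ v x‖), mul_nonneg hB (sq_nonneg (v x)),
          mul_nonneg (sq_nonneg B) (sq_nonneg ‖∇ v x‖)]

variable [MeasurableSpace E] [BorelSpace E] {μ : Measure E}

theorem integrable_multiplierField {X : E → E} {q v : E → ℝ} {B : ℝ} (hX : ContDiff ℝ 3 X)
    (hq : ContDiff ℝ 1 q) (hv : ContDiff ℝ 2 v) (hXB : ∀ x, ‖X x‖ ≤ B)
    (hdivB : ∀ x, |divergence X x| ≤ B) (hgradB : ∀ x, ‖∇ (divergence X) x‖ ≤ B)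
    (hqB : ∀ x, |q x| ≤ B) (hvi : Integrable (fun x ↦ v x ^ 2) μ)
    (hdvi : Integrable (fun x ↦ ‖∇ v x‖ ^ 2) μ) : Integrable (multiplierField X q v) μ :=
  ((hdvi.add hvi).const_mul (B ^ 2 + 4 * B)).mono'
    (contDiff_multiplierField hX hq hv).continuous.aestronglyMeasurable
    (.of_forall fun x ↦ norm_multiplierField_le (hXB x) (hdivB x) (hgradB x) (hqB x))

variable [μ.IsAddHaarMeasure]

theorem integrable_norm_gradient_sq {v : E → ℝ} {B : ℝ} (hv : ContDiff ℝ 2 v)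
    (hΔ : ∀ x, |Δ v x| ≤ B * (‖∇ v x‖ + |v x|)) (hvi : Integrable (fun x ↦ v x ^ 2) μ) :
    Integrable (fun x ↦ ‖∇ v x‖ ^ 2) μ := by
  simp_rw [sq (v _)] at hvi
  refine integrable_of_le_laplacian_add (K := B ^ 2 + 2 * B) (hv.mul hv) hvi
    ((contDiff_gradient hv (m := 0) (by norm_num)).continuous.norm.pow 2)
    (fun x ↦ sq_nonneg _) fun x ↦ ?_
  have hmul : -(v x * Δ v x) ≤ |v x| * (B * (‖∇ v x‖ + |v x|)) :=
    (neg_le_abs _).trans ((abs_mul _ _).trans_le (by gcongr; exact hΔ x))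
  rw [laplacian_mul hv hv, real_inner_self_eq_norm_sq, ← abs_mul_abs_self (v x)]
  linarith [sq_nonneg (‖∇ v x‖ - B * |v x|)]

theorem integrable_multiplierField_of_laplacian_eq {X : E → E} {q v : E → ℝ} {B : ℝ}
    (hX : ContDiff ℝ 3 X) (hq : ContDiff ℝ 1 q) (hv : ContDiff ℝ 2 v) (hXB : ∀ x, ‖X x‖ ≤ B)
    (hdivB : ∀ x, |divergence X x| ≤ B) (hgradB : ∀ x, ‖∇ (divergence X) x‖ ≤ B)
    (hqB : ∀ x, |q x| ≤ B)
    (hΔv : ∀ x, Δ v x = 2 * ⟪X x, ∇ v x⟫_ℝ + divergence X x * v x + q x * v x)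
    (hvi : Integrable (fun x ↦ v x ^ 2) μ) : Integrable (multiplierField X q v) μ := by
  refine integrable_multiplierField hX hq hv hXB hdivB hgradB hqB hvi
    (integrable_norm_gradient_sq (B := 2 * B) hv (fun x ↦ ?_) hvi)
  calc |Δ v x| ≤ 2 * |⟪X x, ∇ v x⟫_ℝ| + |divergence X x| * |v x| + |q x| * |v x| := by
        rw [hΔv, ← abs_two, ← abs_mul, ← abs_mul, ← abs_mul, abs_two]
        exact abs_add_three _ _ _
    _ ≤ 2 * (B * ‖∇ v x‖) + B * |v x| + B * |v x| := by
        gcongr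
        exacts [(abs_real_inner_le_norm _ _).trans (by gcongr; exact hXB x), hdivB x, hqB x]
    _ = 2 * B * (‖∇ v x‖ + |v x|) := by ring

end MultiplierField

section ExpConjugation

variable {E : Type*} [NormedAddCommGroup E] [InnerProductSpace ℝ E] [FiniteDimensional ℝ E]

theorem gradient_exp_mul {η u : E → ℝ} {x : E} (hη : DifferentiableAt ℝ η x)
    (hu : DifferentiableAt ℝ u x) :
    ∇ (fun y ↦ Real.exp (η y) * u y) x =
      Real.exp (η x) • ∇ u x + (Real.exp (η x) * u x) • ∇ η x := by
  rw [gradient_mul hη.exp hu, gradient_exp hη, smul_smul, mul_comm (u x)]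

theorem laplacian_exp {η : E → ℝ} (hη : ContDiff ℝ 2 η) (x : E) :
    Δ (fun y ↦ Real.exp (η y)) x = Real.exp (η x) * (Δ η x + ⟪∇ η x, ∇ η x⟫_ℝ) := by
  have hη1 : Differentiable ℝ η := hη.differentiable two_ne_zero
  have hdη : Differentiable ℝ (∇ η) :=
    (contDiff_gradient hη (m := 1) (by norm_num)).differentiable_one
  have hgrad : ∇ (fun y ↦ Real.exp (η y)) = fun y ↦ Real.exp (η y) • ∇ η y :=
    funext fun y ↦ gradient_exp (hη1 y)
  rw [← divergence_gradient, hgrad, divergence_smul (hη1 x).exp (hdη x), gradient_exp (hη1 x),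
    divergence_gradient, real_inner_smul_left]
  ring

theorem laplacian_exp_mul {η u : E → ℝ} (hη : ContDiff ℝ 2 η) (hu : ContDiff ℝ 2 u) (x : E) :
    Δ (fun y ↦ Real.exp (η y) * u y) x =
      2 * ⟪∇ η x, ∇ (fun y ↦ Real.exp (η y) * u y) x⟫_ℝ
        + (Δ η x - ‖∇ η x‖ ^ 2) * (Real.exp (η x) * u x) + Real.exp (η x) * Δ u x := by
  rw [laplacian_mul hη.exp hu, laplacian_exp hη, gradient_exp (hη.differentiable two_ne_zero x),
    gradient_exp_mul (hη.differentiable two_ne_zero x) (hu.differentiable two_ne_zero x),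
    inner_add_right, real_inner_smul_left, real_inner_smul_right, real_inner_smul_right,
    real_inner_self_eq_norm_sq]
  ring

theorem laplacian_exp_mul_of_laplacian_eq {W η u : E → ℝ} (hη : ContDiff ℝ 2 η)
    (hu : ContDiff ℝ 2 u) (hΔu : ∀ x, Δ u x = W x * u x) (x : E) :
    Δ (fun y ↦ Real.exp (η y) * u y) x =
      2 * ⟪∇ η x, ∇ (fun y ↦ Real.exp (η y) * u y) x⟫_ℝ + Δ η x * (Real.exp (η x) * u x)
        + (W x - ⟪∇ η x, ∇ η x⟫_ℝ) * (Real.exp (η x) * u x) := by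
  rw [laplacian_exp_mul hη hu, hΔu, real_inner_self_eq_norm_sq]
  ring

end ExpConjugation

section CarlemanEstimate

variable {E : Type*} [NormedAddCommGroup E] [InnerProductSpace ℝ E] [FiniteDimensional ℝ E]

/-- `η` is an admissible Carleman weight for `Δ - W`: it is convex, `∇ η`, `Δ η` and `∇ (Δ η)`
are bounded, and the Hessian along `∇ η` dominates the error terms in the commutator identity. -/
structure IsCarlemanWeight (W η : E → ℝ) : Prop where
  contDiff : ContDiff ℝ 4 η
  bounded : ∃ B, ∀ x, ‖∇ η x‖ ≤ B ∧ |Δ η x| ≤ B ∧ ‖∇ (Δ η) x‖ ≤ B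
  hessian_nonneg : ∀ x ξ, 0 ≤ ⟪fderiv ℝ (∇ η) x ξ, ξ⟫_ℝ
  lt_hessian : ∀ x, 1 / 2 * Δ (Δ η) x + ⟪∇ W x, ∇ η x⟫_ℝ <
    2 * ⟪fderiv ℝ (∇ η) x (∇ η x), ∇ η x⟫_ℝ

theorem divergence_multiplierField_gradient {W η v : E → ℝ} (hη : ContDiff ℝ 4 η)
    (hW : ContDiff ℝ 1 W) (hv : ContDiff ℝ 2 v) {x : E}
    (hΔv : Δ v x =
      2 * ⟪∇ η x, ∇ v x⟫_ℝ + Δ η x * v x + (W x - ⟪∇ η x, ∇ η x⟫_ℝ) * v x) :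
    divergence (multiplierField (∇ η) (fun y ↦ W y - ⟪∇ η y, ∇ η y⟫_ℝ) v) x =
      (2 * ⟪∇ η x, ∇ v x⟫_ℝ + Δ η x * v x) ^ 2 + 2 * ⟪fderiv ℝ (∇ η) x (∇ v x), ∇ v x⟫_ℝ
        + v x ^ 2 * (2 * ⟪fderiv ℝ (∇ η) x (∇ η x), ∇ η x⟫_ℝ
            - (1 / 2 * Δ (Δ η) x + ⟪∇ W x, ∇ η x⟫_ℝ)) := by
  have hdη : ContDiff ℝ 3 (∇ η) := contDiff_gradient hη (by norm_num)
  have hdη1 : Differentiable ℝ (∇ η) := hdη.differentiable three_ne_zero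
  have hsq : ContDiff ℝ 1 (fun y ↦ ⟪∇ η y, ∇ η y⟫_ℝ) := (hdη.inner ℝ hdη).of_le (by norm_num)
  rw [divergence_multiplierField hdη (hW.sub hsq) hv, hΔv, divergence_gradient,
    gradient_sub (hW.differentiable_one x) (hsq.differentiable_one x), inner_sub_left,
    inner_gradient_inner (hdη1 x) (hdη1 x), real_inner_comm (fderiv ℝ (∇ η) x (∇ η x))]
  ring

theorem IsCarlemanWeight.sq_mul_le_divergence_multiplierField {W η v : E → ℝ}
    (hη : IsCarlemanWeight W η) (hW : ContDiff ℝ 1 W) (hv : ContDiff ℝ 2 v) {x : E}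
    (hΔv : Δ v x =
      2 * ⟪∇ η x, ∇ v x⟫_ℝ + Δ η x * v x + (W x - ⟪∇ η x, ∇ η x⟫_ℝ) * v x) :
    v x ^ 2 * (2 * ⟪fderiv ℝ (∇ η) x (∇ η x), ∇ η x⟫_ℝ
        - (1 / 2 * Δ (Δ η) x + ⟪∇ W x, ∇ η x⟫_ℝ)) ≤
      divergence (multiplierField (∇ η) (fun y ↦ W y - ⟪∇ η y, ∇ η y⟫_ℝ) v) x := by
  rw [divergence_multiplierField_gradient hη.contDiff hW hv hΔv]
  have hhess := hη.hessian_nonneg x (∇ v x)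
  exact le_add_of_nonneg_left (by positivity)

variable [MeasurableSpace E] [BorelSpace E] {μ : Measure E} [μ.IsAddHaarMeasure]

theorem IsCarlemanWeight.integrable_multiplierField {W η v : E → ℝ} (hη : IsCarlemanWeight W η)
    (hW : ContDiff ℝ 1 W) (hWB : ∃ B, ∀ x, |W x| ≤ B) (hv : ContDiff ℝ 2 v)
    (hΔv : ∀ x, Δ v x =
      2 * ⟪∇ η x, ∇ v x⟫_ℝ + Δ η x * v x + (W x - ⟪∇ η x, ∇ η x⟫_ℝ) * v x)
    (hvi : Integrable (fun x ↦ v x ^ 2) μ) :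
    Integrable (multiplierField (∇ η) (fun y ↦ W y - ⟪∇ η y, ∇ η y⟫_ℝ) v) μ := by
  obtain ⟨B, hB⟩ := hη.bounded
  obtain ⟨C, hC⟩ := hWB
  have hB0 : 0 ≤ B := (norm_nonneg _).trans (hB 0).1
  have hC0 : 0 ≤ C := (abs_nonneg _).trans (hC 0)
  have hBle : B ≤ B + (C + B ^ 2) := le_add_of_nonneg_right (by positivity)
  have hqB (x : E) : |W x - ⟪∇ η x, ∇ η x⟫_ℝ| ≤ B + (C + B ^ 2) := by
    refine (abs_sub _ _).trans ((add_le_add (hC x) ?_).trans (le_add_of_nonneg_left hB0))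
    rw [real_inner_self_eq_norm_sq, abs_sq]
    gcongr
    exact (hB x).1
  have hdη : ContDiff ℝ 3 (∇ η) := contDiff_gradient hη.contDiff (by norm_num)
  exact integrable_multiplierField_of_laplacian_eq hdη
    (hW.sub ((hdη.inner ℝ hdη).of_le (by norm_num))) hv (fun x ↦ (hB x).1.trans hBle)
    (fun x ↦ divergence_gradient η ▸ (hB x).2.1.trans hBle)
    (fun x ↦ divergence_gradient η ▸ (hB x).2.2.trans hBle) hqB
    (divergence_gradient η ▸ hΔv) hvi

theorem IsCarlemanWeight.eq_zero_of_laplacian_eq {W η v : E → ℝ} (hη : IsCarlemanWeight W η)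
    (hW : ContDiff ℝ 1 W) (hWB : ∃ B, ∀ x, |W x| ≤ B) (hv : ContDiff ℝ 2 v)
    (hΔv : ∀ x, Δ v x =
      2 * ⟪∇ η x, ∇ v x⟫_ℝ + Δ η x * v x + (W x - ⟪∇ η x, ∇ η x⟫_ℝ) * v x)
    (hvi : Integrable (fun x ↦ v x ^ 2) μ) : v = 0 := by
  have hdη : ContDiff ℝ 3 (∇ η) := contDiff_gradient hη.contDiff (by norm_num)
  have hdefect (x : E) := sub_pos.mpr (hη.lt_hessian x)
  have hdiv_ge (x : E) := hη.sq_mul_le_divergence_multiplierField hW hv (hΔv x)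
  have hzero : divergence (multiplierField (∇ η) (fun y ↦ W y - ⟪∇ η y, ∇ η y⟫_ℝ) v) = 0 :=
    divergence_eq_zero_of_integrable
      (contDiff_multiplierField hdη (hW.sub ((hdη.inner ℝ hdη).of_le (by norm_num))) hv)
      (hη.integrable_multiplierField hW hWB hv hΔv hvi)
      fun x ↦ (mul_nonneg (sq_nonneg _) (hdefect x).le).trans (hdiv_ge x)
  ext x
  have hle := (hdiv_ge x).trans_eq (congrFun hzero x)
  exact pow_eq_zero_iff two_ne_zero |>.mp
    (le_antisymm (nonpos_of_mul_nonpos_left hle (hdefect x)) (sq_nonneg _))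

theorem IsCarlemanWeight.eq_zero {W η u : E → ℝ} (hη : IsCarlemanWeight W η)
    (hW : ContDiff ℝ 1 W) (hWB : ∃ B, ∀ x, |W x| ≤ B) (hu : ContDiff ℝ 2 u)
    (hΔu : ∀ x, Δ u x = W x * u x) (hint : Integrable (fun x ↦ (Real.exp (η x) * u x) ^ 2) μ) :
    u = 0 := by
  have hη2 : ContDiff ℝ 2 η := hη.contDiff.of_le (by norm_num)
  have hv := hη.eq_zero_of_laplacian_eq hW hWB (hη2.exp.mul hu)
    (laplacian_exp_mul_of_laplacian_eq hη2 hu hΔu) hint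
  ext x
  exact (mul_eq_zero.mp (congrFun hv x)).resolve_left (Real.exp_ne_zero _)

end CarlemanEstimate

/-! ### Powers of the Japanese bracket -/

section BracketPow

variable {E : Type*} [NormedAddCommGroup E]

/-- The power `⟨x⟩ ^ p` of the Japanese bracket `⟨x⟩ = √(1 + ‖x‖ ^ 2)`. -/
noncomputable def bracketPow (p : ℝ) (x : E) : ℝ := (1 + ‖x‖ ^ 2) ^ (p / 2)

theorem bracketPow_pos (p : ℝ) (x : E) : 0 < bracketPow p x := by
  unfold bracketPow
  positivity

theorem bracketPow_zero (x : E) : bracketPow 0 x = 1 := by simp [bracketPow]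

theorem bracketPow_mul (p q : ℝ) (x : E) :
    bracketPow p x * bracketPow q x = bracketPow (p + q) x := by
  rw [bracketPow, bracketPow, ← Real.rpow_add (by positivity), ← add_div, bracketPow]

theorem bracketPow_le_bracketPow {p q : ℝ} (hpq : p ≤ q) (x : E) :
    bracketPow p x ≤ bracketPow q x :=
  Real.rpow_le_rpow_of_exponent_le (le_add_of_nonneg_right (sq_nonneg _)) (by linarith)

theorem mul_bracketPow_le_abs_mul {p q : ℝ} (hpq : p ≤ q) (C : ℝ) (x : E) :
    C * bracketPow p x ≤ |C| * bracketPow q x :=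
  mul_le_mul (le_abs_self C) (bracketPow_le_bracketPow hpq x) (bracketPow_pos p x).le
    (abs_nonneg C)

theorem bracketPow_one_le (x : E) : bracketPow 1 x ≤ 1 + ‖x‖ := by
  rw [bracketPow, ← Real.sqrt_eq_rpow]
  exact sqrt_one_add_norm_sq_le x

theorem bracketPow_two (x : E) : bracketPow 2 x = 1 + ‖x‖ ^ 2 := by simp [bracketPow]

theorem norm_le_bracketPow_one (x : E) : ‖x‖ ≤ bracketPow 1 x := by
  rw [bracketPow, ← Real.sqrt_eq_rpow]
  exact Real.le_sqrt_of_sq_le (by linarith)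

theorem one_add_norm_rpow_le_bracketPow {p : ℝ} (hp : p ≤ 0) (x : E) :
    (1 + ‖x‖) ^ p ≤ bracketPow p x := by
  calc (1 + ‖x‖) ^ p ≤ bracketPow 1 x ^ p :=
        Real.rpow_le_rpow_of_nonpos (bracketPow_pos 1 x) (bracketPow_one_le x) hp
    _ = bracketPow p x := by
        rw [bracketPow, bracketPow, ← Real.rpow_mul (by positivity), one_div_mul_eq_div]

variable [InnerProductSpace ℝ E]

theorem inner_sq_mul_bracketPow_le (x ξ : E) :
    ⟪x, ξ⟫_ℝ ^ 2 * bracketPow (-2) x ≤ ‖ξ‖ ^ 2 := by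
  calc ⟪x, ξ⟫_ℝ ^ 2 * bracketPow (-2) x
      ≤ bracketPow 2 x * ‖ξ‖ ^ 2 * bracketPow (-2) x := by
        gcongr
        · exact (bracketPow_pos _ x).le
        · rw [bracketPow_two, ← sq_abs]
          calc |⟪x, ξ⟫_ℝ| ^ 2 ≤ (‖x‖ * ‖ξ‖) ^ 2 := by gcongr; exact abs_real_inner_le_norm x ξ
            _ = ‖x‖ ^ 2 * ‖ξ‖ ^ 2 := mul_pow _ _ _
            _ ≤ _ := by gcongr; exact le_add_of_nonneg_left zero_le_one
    _ = ‖ξ‖ ^ 2 := by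
        rw [mul_right_comm, bracketPow_mul, add_neg_cancel, bracketPow_zero, one_mul]

theorem contDiff_bracketPow {n : WithTop ℕ∞} (p : ℝ) : ContDiff ℝ n (bracketPow p : E → ℝ) :=
  (contDiff_const.add (contDiff_norm_sq ℝ)).rpow_const_of_ne fun x ↦ by positivity

theorem gradient_bracketPow [CompleteSpace E] (p : ℝ) :
    ∇ (bracketPow p : E → ℝ) = fun x ↦ (p * bracketPow (p - 2) x) • x := by
  ext1 x
  have hsq : HasFDerivAt (fun y : E ↦ 1 + ‖y‖ ^ 2) (2 • innerSL ℝ x) x :=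
    (hasStrictFDerivAt_norm_sq x).hasFDerivAt.const_add 1
  refine (hasGradientAt_iff_hasFDerivAt.mpr
    ((hsq.rpow_const (p := p / 2) (.inl (by positivity))).congr_fderiv ?_)).gradient
  ext ξ
  simp only [bracketPow, sub_div, div_self (two_ne_zero' ℝ), map_smul, smul_apply, nsmul_eq_mul,
    smul_eq_mul, coe_innerSL_apply, InnerProductSpace.toDual_apply_apply, Nat.cast_ofNat]
  ring

theorem inner_fderiv_gradient_bracketPow [CompleteSpace E] (p : ℝ) (x ξ : E) :
    ⟪fderiv ℝ (∇ (bracketPow p : E → ℝ)) x ξ, ξ⟫_ℝ =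
      p * bracketPow (p - 2) x * ‖ξ‖ ^ 2
        + p * (p - 2) * bracketPow (p - 4) x * ⟪x, ξ⟫_ℝ ^ 2 := by
  have hdiff : DifferentiableAt ℝ (bracketPow (p - 2) : E → ℝ) x :=
    (contDiff_bracketPow (n := 1) _).differentiable_one x
  have hderiv : fderiv ℝ (bracketPow (p - 2) : E → ℝ) x ξ =
      (p - 2) * bracketPow (p - 4) x * ⟪x, ξ⟫_ℝ := by
    rw [← inner_gradient_left, gradient_bracketPow, real_inner_smul_left]
    ring_nf
  rw [gradient_bracketPow, fderiv_fun_smul (hdiff.const_mul p) differentiableAt_fun_id,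
    fderiv_const_mul hdiff]
  simp only [fderiv_fun_id, add_apply, smul_apply, ContinuousLinearMap.id_apply,
    ContinuousLinearMap.smulRight_apply, hderiv, smul_eq_mul, inner_add_left, real_inner_smul_left,
    real_inner_self_eq_norm_sq]
  ring

variable [FiniteDimensional ℝ E]

theorem laplacian_bracketPow (p : ℝ) :
    Δ (bracketPow p : E → ℝ) = (p * (Module.finrank ℝ E + p - 2)) • bracketPow (p - 2)
      - (p * (p - 2)) • bracketPow (p - 4) := by
  ext x
  have hdiff : DifferentiableAt ℝ (bracketPow (p - 2) : E → ℝ) x :=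
    (contDiff_bracketPow (n := 1) _).differentiable_one x
  have hid : divergence (fun y : E ↦ y) x = Module.finrank ℝ E := by
    simp [divergence]
  have hsq : ‖x‖ ^ 2 * bracketPow (p - 4) x = bracketPow (p - 2) x - bracketPow (p - 4) x := by
    rw [eq_sub_iff_add_eq', ← one_add_mul, ← bracketPow_two, bracketPow_mul]
    ring_nf
  rw [← divergence_gradient, gradient_bracketPow,
    divergence_smul (hdiff.const_mul p) differentiableAt_fun_id, hid, gradient_const_mul _ hdiff,
    gradient_bracketPow]
  simp only [real_inner_smul_left, real_inner_self_eq_norm_sq, Pi.sub_apply, Pi.smul_apply,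
    smul_eq_mul, show p - 2 - 2 = p - 4 by ring]
  linear_combination p * (p - 2) * hsq

end BracketPow

section BracketSpan

variable {E : Type*} [NormedAddCommGroup E]

variable (E) in
/-- Finite linear combinations of the brackets `⟨x⟩ ^ p` with `p ≤ m`: radial symbols of order
`m`, on which each derivative lowers the order by one. -/
noncomputable def bracketSpan (m : ℝ) : Submodule ℝ (E → ℝ) :=
  .span ℝ (bracketPow '' Set.Iic m)

theorem bracketPow_mem_bracketSpan {p m : ℝ} (hp : p ≤ m) :
    (bracketPow p : E → ℝ) ∈ bracketSpan E m :=
  Submodule.subset_span ⟨p, hp, rfl⟩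

theorem exists_abs_le_of_mem_bracketSpan {m : ℝ} {f : E → ℝ} (hf : f ∈ bracketSpan E m) :
    ∃ C, ∀ x, |f x| ≤ C * bracketPow m x := by
  induction hf using Submodule.span_induction with
  | mem _ h =>
    obtain ⟨p, hp, rfl⟩ := h
    exact ⟨1, fun x ↦ by
      rw [abs_of_pos (bracketPow_pos p x), one_mul]; exact bracketPow_le_bracketPow hp x⟩
  | zero => exact ⟨0, fun x ↦ by simp⟩
  | add f g _ _ hf hg =>
    obtain ⟨C, hC⟩ := hf
    obtain ⟨D, hD⟩ := hg
    exact ⟨C + D, fun x ↦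
      (abs_add_le _ _).trans ((add_le_add (hC x) (hD x)).trans_eq (add_mul C D _).symm)⟩
  | smul c f _ hf =>
    obtain ⟨C, hC⟩ := hf
    refine ⟨|c| * C, fun x ↦ ?_⟩
    rw [Pi.smul_apply, smul_eq_mul, abs_mul, mul_assoc]
    gcongr
    exact hC x

variable [InnerProductSpace ℝ E]

theorem contDiff_of_mem_bracketSpan {n : WithTop ℕ∞} {m : ℝ} {f : E → ℝ}
    (hf : f ∈ bracketSpan E m) : ContDiff ℝ n f := by
  induction hf using Submodule.span_induction with
  | mem _ h =>
    obtain ⟨p, -, rfl⟩ := h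
    exact contDiff_bracketPow p
  | zero => exact contDiff_const
  | add _ _ _ _ hf hg => exact hf.add hg
  | smul c _ _ hf => exact hf.const_smul c

theorem norm_gradient_bracketPow_le [CompleteSpace E] (p : ℝ) (x : E) :
    ‖∇ (bracketPow p : E → ℝ) x‖ ≤ |p| * bracketPow (p - 1) x := by
  rw [gradient_bracketPow, norm_smul, Real.norm_eq_abs, abs_mul,
    abs_of_pos (bracketPow_pos _ x), mul_assoc, show p - 1 = p - 2 + 1 by ring, ← bracketPow_mul]
  gcongr
  exacts [(bracketPow_pos _ x).le, norm_le_bracketPow_one x]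

theorem exists_norm_gradient_le_of_mem_bracketSpan [CompleteSpace E] {m : ℝ} {f : E → ℝ}
    (hf : f ∈ bracketSpan E m) : ∃ C, ∀ x, ‖∇ f x‖ ≤ C * bracketPow (m - 1) x := by
  induction hf using Submodule.span_induction with
  | mem _ h =>
    obtain ⟨p, hp, rfl⟩ := h
    refine ⟨|p|, fun x ↦ (norm_gradient_bracketPow_le p x).trans ?_⟩
    gcongr
    exact bracketPow_le_bracketPow (sub_le_sub_right hp 1) x
  | zero => exact ⟨0, fun x ↦ by simp [gradient]⟩
  | add f g hf hg ihf ihg =>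
    obtain ⟨C, hC⟩ := ihf
    obtain ⟨D, hD⟩ := ihg
    refine ⟨C + D, fun x ↦ ?_⟩
    have hadd : ∇ (f + g) x = ∇ f x + ∇ g x := gradient_add
      ((contDiff_of_mem_bracketSpan hf).differentiable_one x)
      ((contDiff_of_mem_bracketSpan hg).differentiable_one x)
    rw [hadd, add_mul]
    exact norm_add_le_of_le (hC x) (hD x)
  | smul c f hf ihf =>
    obtain ⟨C, hC⟩ := ihf
    refine ⟨|c| * C, fun x ↦ ?_⟩
    rw [gradient_const_smul c (contDiff_of_mem_bracketSpan hf).differentiable_one, Pi.smul_apply,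
      norm_smul, mul_assoc]
    exact mul_le_mul_of_nonneg_left (hC x) (norm_nonneg c)

variable [FiniteDimensional ℝ E]

theorem laplacian_mem_bracketSpan {m : ℝ} {f : E → ℝ} (hf : f ∈ bracketSpan E m) :
    Δ f ∈ bracketSpan E (m - 2) := by
  induction hf using Submodule.span_induction with
  | mem _ h =>
    obtain ⟨p, hp, rfl⟩ := h
    rw [Set.mem_Iic] at hp
    rw [laplacian_bracketPow]
    exact sub_mem (Submodule.smul_mem _ _ (bracketPow_mem_bracketSpan (by linarith)))
      (Submodule.smul_mem _ _ (bracketPow_mem_bracketSpan (by linarith)))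
  | zero =>
    have hzero : Δ (0 : E → ℝ) = 0 := InnerProductSpace.laplacian_const
    rw [hzero]
    exact zero_mem _
  | add f g hf hg ihf ihg =>
    have hadd : Δ (f + g) = Δ f + Δ g := funext fun x ↦
      (contDiff_of_mem_bracketSpan hf).contDiffAt.laplacian_add
        (contDiff_of_mem_bracketSpan hg).contDiffAt
    exact hadd ▸ add_mem ihf ihg
  | smul c f hf ihf =>
    rw [laplacian_const_smul c (contDiff_of_mem_bracketSpan hf)]
    exact Submodule.smul_mem _ c ihf

theorem exists_bound_derivatives_of_mem_bracketSpan {f : E → ℝ} (hf : f ∈ bracketSpan E 1) :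
    ∃ B, ∀ x, ‖∇ f x‖ ≤ B ∧ |Δ f x| ≤ B ∧ ‖∇ (Δ f) x‖ ≤ B := by
  have hle {p : ℝ} (hp : p ≤ 0) (C : ℝ) (x : E) : C * bracketPow p x ≤ |C| :=
    (mul_bracketPow_le_abs_mul hp C x).trans_eq (by rw [bracketPow_zero, mul_one])
  obtain ⟨C₁, hC₁⟩ := exists_norm_gradient_le_of_mem_bracketSpan hf
  obtain ⟨C₂, hC₂⟩ := exists_abs_le_of_mem_bracketSpan (laplacian_mem_bracketSpan hf)
  obtain ⟨C₃, hC₃⟩ := exists_norm_gradient_le_of_mem_bracketSpan (laplacian_mem_bracketSpan hf)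
  refine ⟨|C₁| + |C₂| + |C₃|, fun x ↦ ⟨?_, ?_, ?_⟩⟩
  · linarith [(hC₁ x).trans (hle (by norm_num) C₁ x), abs_nonneg C₂, abs_nonneg C₃]
  · linarith [(hC₂ x).trans (hle (by norm_num) C₂ x), abs_nonneg C₁, abs_nonneg C₃]
  · linarith [(hC₃ x).trans (hle (by norm_num) C₃ x), abs_nonneg C₁, abs_nonneg C₂]

end BracketSpan

/-! ### Construction of the weight -/

section ConvexWeight

variable {E : Type*} [NormedAddCommGroup E]

/-- The convex weight `⟨x⟩ - ⟨x⟩ ^ (1 - ε) / (2 (1 - ε))`, meant for `0 < ε < 1`. The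
correction to `⟨x⟩`, whose Hessian in the radial direction is only of size `⟨x⟩ ^ (-3)`, makes the
Hessian at least of size `⟨x⟩ ^ (-1 - ε)` in every direction. -/
noncomputable def convexWeight (ε : ℝ) : E → ℝ :=
  bracketPow 1 - (2 * (1 - ε))⁻¹ • bracketPow (1 - ε)

theorem convexWeight_mem_bracketSpan {ε : ℝ} (hε : 0 ≤ ε) :
    (convexWeight ε : E → ℝ) ∈ bracketSpan E 1 :=
  sub_mem (bracketPow_mem_bracketSpan le_rfl)
    (Submodule.smul_mem _ _ (bracketPow_mem_bracketSpan (by linarith)))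

section Hessian

variable [InnerProductSpace ℝ E] [CompleteSpace E]

theorem inner_fderiv_gradient_convexWeight {ε : ℝ} (hε : ε ≠ 1) (x ξ : E) :
    ⟪fderiv ℝ (∇ (convexWeight ε : E → ℝ)) x ξ, ξ⟫_ℝ =
      (bracketPow (-1) x - 1 / 2 * bracketPow (-1 - ε) x)
          * (‖ξ‖ ^ 2 - ⟪x, ξ⟫_ℝ ^ 2 * bracketPow (-2) x)
        + ε / 2 * bracketPow (-1 - ε) x * (⟪x, ξ⟫_ℝ ^ 2 * bracketPow (-2) x) := by
  have hdiff (p : ℝ) : Differentiable ℝ (bracketPow p : E → ℝ) :=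
    (contDiff_bracketPow (n := 1) p).differentiable_one
  have hdiff' (p : ℝ) : DifferentiableAt ℝ (∇ (bracketPow p : E → ℝ)) x :=
    (contDiff_gradient (contDiff_bracketPow p) (m := 1) one_add_one_eq_two.le).differentiable_one x
  have hgrad : ∇ (convexWeight ε : E → ℝ) =
      ∇ (bracketPow 1) - (2 * (1 - ε))⁻¹ • ∇ (bracketPow (1 - ε)) :=
    funext fun y ↦ (gradient_sub (hdiff 1 y) ((hdiff _ y).const_mul _)).trans <|
      congrArg _ (gradient_const_mul _ (hdiff _ y))
  rw [hgrad, fderiv_sub (hdiff' _) ((hdiff' _).const_smul _),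
    fderiv_const_smul (hdiff' _), sub_apply, smul_apply,
    inner_sub_left, real_inner_smul_left, inner_fderiv_gradient_bracketPow,
    inner_fderiv_gradient_bracketPow, show (1 : ℝ) - 2 = -1 by norm_num,
    show (1 : ℝ) - 4 = -1 + -2 by norm_num, show 1 - ε - 2 = -1 - ε by ring,
    show 1 - ε - 4 = -1 - ε + -2 by ring, ← bracketPow_mul, ← bracketPow_mul]
  field_simp [sub_ne_zero.mpr hε.symm]
  ring

theorem le_inner_fderiv_gradient_convexWeight {ε : ℝ} (hε0 : 0 ≤ ε) (hε1 : ε < 1) (x ξ : E) :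
    ε / 2 * bracketPow (-1 - ε) x * ‖ξ‖ ^ 2 ≤
      ⟪fderiv ℝ (∇ (convexWeight ε : E → ℝ)) x ξ, ξ⟫_ℝ := by
  rw [inner_fderiv_gradient_convexWeight hε1.ne]
  have hradial := sub_nonneg.mpr (inner_sq_mul_bracketPow_le x ξ)
  have hle : bracketPow (-1 - ε) x ≤ bracketPow (-1) x :=
    bracketPow_le_bracketPow (by linarith) x
  have hcoeff : ε / 2 * bracketPow (-1 - ε) x ≤
      bracketPow (-1) x - 1 / 2 * bracketPow (-1 - ε) x := by
    nlinarith [bracketPow_pos (-1 - ε) x]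
  linarith [mul_le_mul_of_nonneg_right hcoeff hradial]

end Hessian

variable [InnerProductSpace ℝ E] [FiniteDimensional ℝ E]

/- In the Carleman inequality for `t • φ` the Hessian term scales like `t ^ 3` and the error terms
like `t`. -/
theorem isCarlemanWeight_smul {W φ : E → ℝ} {t B : ℝ} (ht : 0 < t) (hφ : ContDiff ℝ 4 φ)
    (hB : ∀ x, ‖∇ φ x‖ ≤ B ∧ |Δ φ x| ≤ B ∧ ‖∇ (Δ φ) x‖ ≤ B)
    (hhess : ∀ x ξ, 0 ≤ ⟪fderiv ℝ (∇ φ) x ξ, ξ⟫_ℝ)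
    (hlt : ∀ x, 1 / 2 * Δ (Δ φ) x + ⟪∇ W x, ∇ φ x⟫_ℝ <
      2 * t ^ 2 * ⟪fderiv ℝ (∇ φ) x (∇ φ x), ∇ φ x⟫_ℝ) : IsCarlemanWeight W (t • φ) := by
  have hφ1 : Differentiable ℝ φ := hφ.differentiable four_ne_zero
  have hdφ : Differentiable ℝ (∇ φ) :=
    (contDiff_gradient hφ (m := 1) (by norm_num)).differentiable_one
  have hφ2 : ContDiff ℝ 2 φ := hφ.of_le (by norm_num)
  have hΔφ : ContDiff ℝ 2 (Δ φ) := contDiff_laplacian hφ (by norm_num)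
  have hgrad_smul : ∇ (t • φ) = t • ∇ φ := gradient_const_smul t hφ1
  have hΔ_smul : Δ (t • φ) = t • Δ φ := laplacian_const_smul t hφ2
  have hfderiv_smul (x : E) : fderiv ℝ (∇ (t • φ)) x = t • fderiv ℝ (∇ φ) x := by
    rw [hgrad_smul, fderiv_const_smul (hdφ x)]
  refine ⟨hφ.const_smul t, ⟨t * B, fun x ↦ ?_⟩, fun x ξ ↦ ?_, fun x ↦ ?_⟩
  · simp only [hgrad_smul, hΔ_smul, gradient_const_smul t (hΔφ.differentiable two_ne_zero),
      Pi.smul_apply, smul_eq_mul, norm_smul, abs_mul, Real.norm_of_nonneg ht.le, abs_of_pos ht]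
    obtain ⟨hgradB, hΔB, hgradΔB⟩ := hB x
    exact ⟨by gcongr, by gcongr, by gcongr⟩
  · rw [hfderiv_smul, smul_apply, real_inner_smul_left]
    exact mul_nonneg ht.le (hhess x ξ)
  · rw [hfderiv_smul, hgrad_smul, hΔ_smul, laplacian_const_smul t hΔφ]
    simp only [Pi.smul_apply, smul_apply, map_smul, real_inner_smul_left, real_inner_smul_right,
      smul_eq_mul]
    linarith [mul_lt_mul_of_pos_left (hlt x) ht]

theorem exists_isCarlemanWeight_smul {W φ ρ : E → ℝ} {c C D B : ℝ} (hφ : ContDiff ℝ 4 φ)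
    (hB : ∀ x, ‖∇ φ x‖ ≤ B ∧ |Δ φ x| ≤ B ∧ ‖∇ (Δ φ) x‖ ≤ B) (hgrad : ∀ x, 1 ≤ ‖∇ φ x‖)
    (hc : 0 < c) (hρ : ∀ x, 0 < ρ x)
    (hhess : ∀ x ξ, c * ρ x * ‖ξ‖ ^ 2 ≤ ⟪fderiv ℝ (∇ φ) x ξ, ξ⟫_ℝ)
    (hΔΔ : ∀ x, |Δ (Δ φ) x| ≤ D * ρ x) (hW : ∀ x, ‖∇ W x‖ ≤ C * ρ x) :
    ∃ t : ℝ, IsCarlemanWeight W (t • φ) := by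
  have hB0 : 0 ≤ B := (norm_nonneg _).trans (hB 0).1
  have hC0 : 0 ≤ C := nonneg_of_mul_nonneg_left ((norm_nonneg _).trans (hW 0)) (hρ 0)
  have hD0 : 0 ≤ D := nonneg_of_mul_nonneg_left ((abs_nonneg _).trans (hΔΔ 0)) (hρ 0)
  have herror (x : E) : 1 / 2 * Δ (Δ φ) x + ⟪∇ W x, ∇ φ x⟫_ℝ ≤ (D / 2 + C * B) * ρ x := by
    have hinner : ⟪∇ W x, ∇ φ x⟫_ℝ ≤ C * ρ x * B :=
      (real_inner_le_norm _ _).trans (mul_le_mul (hW x) (hB x).1 (norm_nonneg _)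
        ((norm_nonneg _).trans (hW x)))
    linarith [(le_abs_self _).trans (hΔΔ x)]
  have hhess_gradient (x : E) : c * ρ x ≤ ⟪fderiv ℝ (∇ φ) x (∇ φ x), ∇ φ x⟫_ℝ :=
    (le_mul_of_one_le_right (mul_pos hc (hρ x)).le (one_le_pow₀ (hgrad x))).trans (hhess x _)
  set t : ℝ := 1 + (D / 2 + C * B) / c with ht_def
  have ht : 1 ≤ t := le_add_of_nonneg_right (by positivity)
  have hct : c * t = c + (D / 2 + C * B) := by rw [ht_def]; field_simp
  refine ⟨t, isCarlemanWeight_smul (one_pos.trans_le ht) hφ hB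
    (fun x ξ ↦ le_trans (by have := hρ x; positivity) (hhess x ξ)) fun x ↦ ?_⟩
  calc 1 / 2 * Δ (Δ φ) x + ⟪∇ W x, ∇ φ x⟫_ℝ ≤ (D / 2 + C * B) * ρ x := herror x
    _ < c * t * ρ x := by
        rw [hct]
        exact mul_lt_mul_of_pos_right (lt_add_of_pos_left _ hc) (hρ x)
    _ ≤ 2 * t ^ 2 * (c * ρ x) := by
        have ht_le : t ≤ 2 * t ^ 2 := by nlinarith
        linarith [mul_le_mul_of_nonneg_right ht_le (mul_pos hc (hρ x)).le]
    _ ≤ 2 * t ^ 2 * ⟪fderiv ℝ (∇ φ) x (∇ φ x), ∇ φ x⟫_ℝ := by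
        gcongr
        exact hhess_gradient x

theorem gradient_add_inner {φ : E → ℝ} (hφ : Differentiable ℝ φ) (a : E) :
    ∇ (fun x ↦ φ x + ⟪a, x⟫_ℝ) = fun x ↦ ∇ φ x + a :=
  funext fun x ↦ (gradient_add (hφ x) (innerSL ℝ a).differentiableAt).trans <|
    congrArg _ (gradient_inner_right a x)

theorem laplacian_add_inner {φ : E → ℝ} (hφ : Differentiable ℝ φ) (a : E) :
    Δ (fun x ↦ φ x + ⟪a, x⟫_ℝ) = Δ φ := by
  ext x
  rw [← divergence_gradient, gradient_add_inner hφ, divergence, fderiv_add_const, ← divergence,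
    divergence_gradient]

/- Tilting `φ` by a linear function leaves its Hessian unchanged and makes its gradient nowhere
zero, so that the Carleman estimate is global and no unique continuation from infinity to a compact
set is needed. -/
theorem exists_isCarlemanWeight_of_le_hessian [Nontrivial E] {W φ ρ : E → ℝ} {c C D B : ℝ}
    (hφ : ContDiff ℝ 4 φ) (hB : ∀ x, ‖∇ φ x‖ ≤ B ∧ |Δ φ x| ≤ B ∧ ‖∇ (Δ φ) x‖ ≤ B)
    (hc : 0 < c) (hρ : ∀ x, 0 < ρ x)
    (hhess : ∀ x ξ, c * ρ x * ‖ξ‖ ^ 2 ≤ ⟪fderiv ℝ (∇ φ) x ξ, ξ⟫_ℝ)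
    (hΔΔ : ∀ x, |Δ (Δ φ) x| ≤ D * ρ x) (hW : ∀ x, ‖∇ W x‖ ≤ C * ρ x) :
    ∃ η, IsCarlemanWeight W η := by
  have hB0 : 0 ≤ B := (norm_nonneg _).trans (hB 0).1
  have hφ1 : Differentiable ℝ φ := hφ.differentiable four_ne_zero
  obtain ⟨a, ha⟩ := exists_norm_eq E (c := B + 1) (by positivity)
  have hgrad_ge (x : E) : 1 ≤ ‖∇ φ x + a‖ := by
    have htriangle := norm_sub_le (∇ φ x + a) (∇ φ x)
    rw [add_sub_cancel_left, ha] at htriangle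
    linarith [(hB x).1]
  have hbound (x : E) :
      ‖∇ φ x + a‖ ≤ B + (B + 1) ∧ |Δ φ x| ≤ B + (B + 1) ∧ ‖∇ (Δ φ) x‖ ≤ B + (B + 1) := by
    obtain ⟨hgradB, hΔB, hgradΔB⟩ := hB x
    exact ⟨norm_add_le_of_le hgradB ha.le, by linarith, by linarith⟩
  obtain ⟨t, ht⟩ := exists_isCarlemanWeight_smul (φ := fun x ↦ φ x + ⟪a, x⟫_ℝ) (W := W)
    (B := B + (B + 1)) (hφ.add (innerSL ℝ a).contDiff)
    (by rwa [gradient_add_inner hφ1, laplacian_add_inner hφ1])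
    (by rwa [gradient_add_inner hφ1]) hc hρ
    (by simpa only [gradient_add_inner hφ1, fderiv_add_const] using hhess)
    (by rwa [laplacian_add_inner hφ1]) hW
  exact ⟨_, ht⟩

theorem exists_isCarlemanWeight [Nontrivial E] {W : E → ℝ} {δ C : ℝ} (hδ : 0 < δ)
    (hW : ∀ x, ‖∇ W x‖ ≤ C * bracketPow (-1 - δ) x) : ∃ η, IsCarlemanWeight W η := by
  set ε : ℝ := min δ (1 / 2)
  have hε0 : 0 < ε := lt_min hδ one_half_pos
  have hε1 : ε < 1 := (min_le_right _ _).trans_lt one_half_lt_one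
  have hφ : convexWeight ε ∈ bracketSpan E 1 := convexWeight_mem_bracketSpan hε0.le
  obtain ⟨B, hB⟩ := exists_bound_derivatives_of_mem_bracketSpan hφ
  obtain ⟨D, hD⟩ := exists_abs_le_of_mem_bracketSpan
    (laplacian_mem_bracketSpan (laplacian_mem_bracketSpan hφ))
  exact exists_isCarlemanWeight_of_le_hessian (contDiff_of_mem_bracketSpan hφ) hB (half_pos hε0)
    (bracketPow_pos _) (le_inner_fderiv_gradient_convexWeight hε0.le hε1)
    (fun x ↦ (hD x).trans (mul_bracketPow_le_abs_mul (by linarith) D x))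
    (fun x ↦ (hW x).trans
      (mul_bracketPow_le_abs_mul (sub_le_sub_left (min_le_left _ _) _) C x))

end ConvexWeight

/-! ### Unique continuation -/

section UniqueContinuation

theorem norm_le_of_norm_fderiv_le_rpow {E F : Type*} [NormedAddCommGroup E] [NormedSpace ℝ E]
    [NormedAddCommGroup F] [NormedSpace ℝ F] {f : E → F} {δ C : ℝ} (hf : Differentiable ℝ f)
    (hδ : 0 < δ) (hC : ∀ x, ‖fderiv ℝ f x‖ ≤ C * (1 + ‖x‖) ^ (-(δ + 1))) (x : E) :
    ‖f x‖ ≤ ‖f 0‖ + C / δ := by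
  have hC0 : 0 ≤ C := by simpa using (norm_nonneg _).trans (hC 0)
  set b : ℝ → ℝ := fun t ↦ ‖f 0‖ + C / δ * (1 - (1 + t * ‖x‖) ^ (-δ)) with hb_def
  have hpos {t : ℝ} (ht : t ∈ Set.Icc (0 : ℝ) 1) : 0 < 1 + t * ‖x‖ := by
    have := mul_nonneg ht.1 (norm_nonneg x)
    positivity
  have hb {t : ℝ} (ht : t ∈ Set.Icc (0 : ℝ) 1) :
      HasDerivAt b (C * (1 + t * ‖x‖) ^ (-(δ + 1)) * ‖x‖) t := by
    have hlin : HasDerivAt (fun s ↦ 1 + s * ‖x‖) ‖x‖ t := by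
      simpa using ((hasDerivAt_id t).mul_const ‖x‖).const_add 1
    refine ((((hlin.rpow_const (p := -δ) (.inl (hpos ht).ne')).const_sub 1).const_mul
      (C / δ)).const_add ‖f 0‖).congr_deriv ?_
    rw [neg_add']
    field_simp
  have hray (t : ℝ) : HasDerivAt (fun s : ℝ ↦ f (s • x)) (fderiv ℝ f (t • x) x) t := by
    have hline : HasDerivAt (fun s : ℝ ↦ s • x) x t := by
      simpa using (hasDerivAt_id t).smul_const x
    exact (hf (t • x)).hasFDerivAt.comp_hasDerivAt t hline
  have hbound {t : ℝ} (ht : t ∈ Set.Ico (0 : ℝ) 1) :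
      ‖fderiv ℝ f (t • x) x‖ ≤ C * (1 + t * ‖x‖) ^ (-(δ + 1)) * ‖x‖ := by
    have := hC (t • x)
    rw [norm_smul, Real.norm_of_nonneg ht.1] at this
    exact (ContinuousLinearMap.le_opNorm _ _).trans (by gcongr)
  have hle := image_norm_le_of_norm_deriv_right_le_deriv_boundary' (a := 0) (b := 1) (B := b)
    (fun t _ ↦ (hray t).continuousAt.continuousWithinAt) (fun t _ ↦ (hray t).hasDerivWithinAt)
    (by simp [hb_def]) (fun t ht ↦ (hb ht).continuousAt.continuousWithinAt)
    (fun t ht ↦ (hb (Set.Ico_subset_Icc_self ht)).hasDerivWithinAt)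
    (fun t ht ↦ hbound ht) (Set.right_mem_Icc.mpr zero_le_one)
  rw [one_smul] at hle
  refine hle.trans (add_le_add_right (mul_le_of_le_one_right (by positivity) ?_) _)
  exact sub_le_self _ (by positivity)

theorem integrable_exp_mul_sq {E F : Type*} [NormedAddCommGroup E] [MeasurableSpace E]
    [OpensMeasurableSpace E] {μ : Measure E} [NormedAddCommGroup F] [NormedSpace ℝ F] {η : E → ℝ}
    {ψ : E → F} {A : ℝ} (hη : Continuous η) (hψ : Continuous ψ) (hηA : ∀ x, η x ≤ A * (1 + ‖x‖))
    (hint : Integrable (fun x ↦ Real.exp (2 * A * ‖x‖) * ‖ψ x‖ ^ 2) μ) (ℓ : F →L[ℝ] ℝ) :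
    Integrable (fun x ↦ (Real.exp (η x) * ℓ (ψ x)) ^ 2) μ := by
  refine (hint.const_mul (Real.exp (2 * A) * ‖ℓ‖ ^ 2)).mono'
    ((hη.rexp.mul (ℓ.continuous.comp hψ)).pow 2).aestronglyMeasurable (.of_forall fun x ↦ ?_)
  calc ‖(Real.exp (η x) * ℓ (ψ x)) ^ 2‖ = Real.exp (η x) ^ 2 * ‖ℓ (ψ x)‖ ^ 2 := by
        rw [norm_pow, norm_mul, mul_pow, Real.norm_of_nonneg (Real.exp_nonneg _)]
    _ ≤ Real.exp (A * (1 + ‖x‖)) ^ 2 * (‖ℓ‖ * ‖ψ x‖) ^ 2 := by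
        gcongr
        exacts [hηA x, ℓ.le_opNorm _]
    _ = Real.exp (2 * A) * ‖ℓ‖ ^ 2 * (Real.exp (2 * A * ‖x‖) * ‖ψ x‖ ^ 2) := by
        have hexp : Real.exp (A * (1 + ‖x‖)) ^ 2 = Real.exp (2 * A) * Real.exp (2 * A * ‖x‖) := by
          rw [← Real.exp_nat_mul, ← Real.exp_add]
          congr 1
          push_cast
          ring
        rw [hexp]
        ring

variable {E : Type*} [NormedAddCommGroup E] [InnerProductSpace ℝ E] [FiniteDimensional ℝ E]

theorem IsCarlemanWeight.exists_le_mul_one_add_norm {W η : E → ℝ} (hη : IsCarlemanWeight W η) :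
    ∃ A, ∀ x, η x ≤ A * (1 + ‖x‖) := by
  obtain ⟨B, hB⟩ := hη.bounded
  have hB0 : 0 ≤ B := (norm_nonneg _).trans (hB 0).1
  refine ⟨|η 0| + B, fun x ↦ ?_⟩
  have hlip : ‖η x - η 0‖ ≤ B * ‖x - 0‖ := convex_univ.norm_image_sub_le_of_norm_fderiv_le
    (fun y _ ↦ hη.contDiff.differentiable four_ne_zero y)
    (fun y _ ↦ (norm_gradient η y).symm.trans_le (hB y).1) (Set.mem_univ _) (Set.mem_univ _)
  rw [sub_zero] at hlip
  have := mul_nonneg (abs_nonneg (η 0)) (norm_nonneg x)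
  linarith [le_abs_self (η 0), (Real.le_norm_self _).trans hlip]

variable [Nontrivial E] [MeasurableSpace E] [BorelSpace E] {μ : Measure E} [μ.IsAddHaarMeasure]
  {F : Type*} [NormedAddCommGroup F] [NormedSpace ℝ F] {ψ : E → F} {δ C : ℝ}

theorem eq_zero_of_laplacian_eq_smul {W : E → ℝ} (hδ : 0 < δ) (hW : ContDiff ℝ 1 W)
    (hdecay : ∀ x, ‖fderiv ℝ W x‖ ≤ C * (1 + ‖x‖) ^ (-(δ + 1))) (hψ : ContDiff ℝ 2 ψ)
    (heq : ∀ x, Δ ψ x = W x • ψ x)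
    (hdec : ∀ α : ℝ, Integrable (fun x ↦ Real.exp (2 * α * ‖x‖) * ‖ψ x‖ ^ 2) μ) : ψ = 0 := by
  have hC0 : 0 ≤ C := by simpa using (norm_nonneg _).trans (hdecay 0)
  have hgradW (x : E) : ‖∇ W x‖ ≤ C * bracketPow (-1 - δ) x := by
    rw [norm_gradient, ← neg_add', add_comm]
    exact (hdecay x).trans (by gcongr; exact one_add_norm_rpow_le_bracketPow (by linarith) x)
  obtain ⟨η, hη⟩ := exists_isCarlemanWeight hδ hgradW
  obtain ⟨A, hA⟩ := hη.exists_le_mul_one_add_norm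
  have hWB : ∀ x, |W x| ≤ ‖W 0‖ + C / δ :=
    norm_le_of_norm_fderiv_le_rpow hW.differentiable_one hδ hdecay
  ext x
  refine SeparatingDual.eq_zero_of_forall_dual_eq_zero (R := ℝ) fun ℓ ↦ ?_
  have hΔ (y : E) : Δ (ℓ ∘ ψ) y = W y * ℓ (ψ y) := by
    rw [hψ.contDiffAt.laplacian_CLM_comp_left, Function.comp_apply, heq, map_smul, smul_eq_mul]
  exact congrFun (hη.eq_zero hW ⟨_, hWB⟩ (ℓ.contDiff.comp hψ) hΔ
    (integrable_exp_mul_sq hη.contDiff.continuous hψ.continuous hA (hdec A) ℓ)) x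

theorem stmt_12_general {V : E → ℝ} {lam : ℝ} (hδ : 0 < δ) (hV : ContDiff ℝ 1 V)
    (hdecay : ∀ x, ‖fderiv ℝ V x‖ ≤ C * (1 + ‖x‖) ^ (-(δ + 1))) (hψ : ContDiff ℝ 2 ψ)
    (heq : ∀ x, -Δ ψ x + V x • ψ x = lam • ψ x)
    (hdec : ∀ α : ℝ, Integrable (fun x ↦ Real.exp (2 * α * ‖x‖) * ‖ψ x‖ ^ 2) μ) : ψ = 0 :=
  eq_zero_of_laplacian_eq_smul (W := fun x ↦ V x - lam) hδ (hV.sub contDiff_const)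
    (by simpa only [fderiv_sub_const] using hdecay) hψ
    (fun x ↦ by rw [sub_smul, ← heq x]; abel) hdec

end UniqueContinuation

theorem lap_eq_laplacian {n : ℕ} {f : EuclideanSpace ℝ (Fin n) → ℂ} (hf : ContDiff ℝ 2 f)
    (x : EuclideanSpace ℝ (Fin n)) : lap f x = Δ f x := by
  have hdf : Differentiable ℝ (fderiv ℝ f) :=
    (hf.fderiv_right (m := 1) one_add_one_eq_two.le).differentiable_one
  rw [congrFun (InnerProductSpace.laplacian_eq_iteratedFDeriv_orthonormalBasis f
    (EuclideanSpace.basisFun (Fin n) ℝ)) x]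
  refine Finset.sum_congr rfl fun i _ ↦ ?_
  rw [fderiv_clm_apply (hdf x) (differentiableAt_const _)]
  simp [iteratedFDeriv_two_apply]

/-- Euclidean instance of Theorem 5.3 / 5.14 (unique continuation at infinity): a
superexponentially decaying eigenfunction of `-Δ + V`, with `V` of symbolic decay
order `-δ` and arbitrary real eigenvalue `λ`, vanishes identically. -/
theorem stmt_12 (n : ℕ) (hn : 1 ≤ n) (δ : ℝ) (hδ : 0 < δ)
    (V : EuclideanSpace ℝ (Fin n) → ℝ) (hV : ContDiff ℝ (⊤ : ℕ∞) V)
    (hdecay : ∀ k : ℕ, ∃ C : ℝ, ∀ x,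
      ‖iteratedFDeriv ℝ k V x‖ ≤ C * (1 + ‖x‖) ^ (-(δ + (k:ℝ))))
    (lam : ℝ)
    (ψ : EuclideanSpace ℝ (Fin n) → ℂ) (hψ : ContDiff ℝ (⊤ : ℕ∞) ψ)
    (heq : ∀ x, -lap ψ x + (V x : ℂ) * ψ x = (lam : ℂ) * ψ x)
    (hdec : ∀ α : ℝ, Integrable (fun x => Real.exp (2*α*‖x‖) * ‖ψ x‖^2)) :
    ∀ x, ψ x = 0 := by
  have : NeZero n := ⟨Nat.one_le_iff_ne_zero.mp hn⟩
  have hψ2 : ContDiff ℝ 2 ψ := contDiff_infty.mp hψ 2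
  obtain ⟨C, hC⟩ := hdecay 1
  simp only [norm_iteratedFDeriv_one, Nat.cast_one] at hC
  simp only [lap_eq_laplacian hψ2, ← Complex.real_smul] at heq
  exact congrFun (stmt_12_general hδ (contDiff_infty.mp hV 1) hC hψ2 heq hdec)
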